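/- Let γ ∈ {−16, 0}. There exists a constant C > 0 (depending only on γ) such that |G(x,t)| ≤ C (1+|t|)^{−1/2} for all x ∈ ℤ² and all t ∈ ℝ. -/

import Mathlib

open MeasureTheory

/-- `ω(ξ) = sqrt((2 − 2cos ξ₁) + (2 − 2cos ξ₂))`. -/
noncomputable def om (ξ : ℝ × ℝ) : ℝ :=
  Real.sqrt ((2 - 2 * Real.cos ξ.1) + (2 - 2 * Real.cos ξ.2))

/-- The fundamental solution of the discrete fourth-order Schrödinger equation
`i∂ₜu + Δ²u − γΔu = 0` on the lattice `ℤ²`. -/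
noncomputable def G2 (γ : ℝ) (x : ℤ × ℤ) (t : ℝ) : ℂ :=
  ((((2 * Real.pi) ^ 2)⁻¹ : ℝ) : ℂ) *
    ∫ ξ in Set.Icc (-Real.pi) Real.pi ×ˢ Set.Icc (-Real.pi) Real.pi,
      Complex.exp (Complex.I *
        (((x.1 : ℝ) * ξ.1 + (x.2 : ℝ) * ξ.2 + (om ξ ^ 4 + γ * om ξ ^ 2) * t : ℝ) : ℂ))

/-!
Completing the square, `ω⁴ + γω²` is, up to a constant, the phase
`(4 + γ/2 - 2 cos ξ₁ - 2 cos ξ₂)²`, so only the value `κ = 4 + γ/2 ≠ 0` matters. Near a point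
where the second derivative along some line is nonzero, van der Corput's second-derivative test on
parallel segments, averaged over their base points, gives the decay `t^{-1/2}`. The Hessian
vanishes only where `sin ξ₁ = sin ξ₂ = 0` and `cos ξ₁ = cos ξ₂ = κ/4 = ±1`, and there the phase is
a translate of the one with `κ = 4` at the origin. At that point it is `≈ r⁴`, and the linear term
is `λ r` along a ray; in the variable `u = r²`, for which `r dr = du/2`, the phase along the ray is
`λ√u` plus a uniformly convex function. For `λ ≤ 0` the sum is still uniformly convex; for `λ > 0`
it is increasing, and one integration by parts away from `u = 0` suffices.

Local bounds are glued by compactness: asking for the bound on every convex piece makes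
inclusion–exclusion available.
-/

section VanDerCorput

open Set intervalIntegral Complex
open scoped Interval

variable {f f' f'' : ℝ → ℝ} {a b c δ μ : ℝ}

theorem norm_integral_exp_I_mul_le_sub (f : ℝ → ℝ) (hab : a ≤ b) :
    ‖∫ x in a..b, exp (I * f x)‖ ≤ b - a := by
  simpa [abs_of_nonneg (sub_nonneg.2 hab)] using
    norm_integral_le_of_norm_le_const (C := 1) fun x (_ : x ∈ Ι a b) ↦
      (norm_exp_I_mul_ofReal (f x)).le

theorem norm_integral_exp_I_mul_le_add (hac : a ≤ c) (hcb : c ≤ b)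
    (hf : ContinuousOn f (Ioc a b)) :
    ‖∫ x in a..b, exp (I * f x)‖ ≤
      ‖∫ x in a..c, exp (I * f x)‖ + ‖∫ x in c..b, exp (I * f x)‖ := by
  have hint {u v : ℝ} (hau : a ≤ u) (huv : u ≤ v) (hvb : v ≤ b) :
      IntervalIntegrable (fun x ↦ exp (I * f x)) volume u v := by
    refine (intervalIntegrable_const (c := (1 : ℝ))).mono_fun' ?_
      (.of_forall fun x ↦ (norm_exp_I_mul_ofReal _).le)
    have := hf.mono (Ioc_subset_Ioc hau hvb)
    rw [uIoc_of_le huv]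
    exact ContinuousOn.aestronglyMeasurable (by fun_prop) measurableSet_Ioc
  rw [← integral_add_adjacent_intervals (hint le_rfl hac hcb) (hint hac hcb le_rfl)]
  exact norm_add_le _ _

theorem norm_integral_exp_I_mul_le_of_deriv_ne_zero (hab : a ≤ b)
    (hf : ∀ x ∈ Icc a b, HasDerivAt f (f' x) x) (hf' : ∀ x ∈ Icc a b, HasDerivAt f' (f'' x) x)
    (hf'' : ContinuousOn f'' (Icc a b)) (h0 : ∀ x ∈ Icc a b, f' x ≠ 0) :
    ‖∫ x in a..b, exp (I * f x)‖ ≤ |f' a|⁻¹ + |f' b|⁻¹ + ∫ x in a..b, |f'' x| / f' x ^ 2 := by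
  rw [← uIcc_of_le hab] at hf hf' hf'' h0
  have hcf : ContinuousOn f (uIcc a b) := HasDerivAt.continuousOn hf
  have hcf' : ContinuousOn f' (uIcc a b) := HasDerivAt.continuousOn hf'
  set u : ℝ → ℂ := fun x ↦ ((f' x)⁻¹ : ℝ)
  set u' : ℝ → ℂ := fun x ↦ (-f'' x / f' x ^ 2 : ℝ)
  set v : ℝ → ℂ := fun x ↦ -I * exp (I * f x)
  set v' : ℝ → ℂ := fun x ↦ f' x * exp (I * f x)
  have hu : ∀ x ∈ uIcc a b, HasDerivAt u (u' x) x := fun x hx ↦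
    ((hf' x hx).inv (h0 x hx)).ofReal_comp
  have hv : ∀ x ∈ uIcc a b, HasDerivAt v (v' x) x := fun x hx ↦
    (((hf x hx).ofReal_comp.const_mul I).cexp.const_mul (-I)).congr_deriv <| by
      linear_combination (-(f' x : ℂ) * exp (I * f x)) * I_mul_I
  have hcu' : ContinuousOn u' (uIcc a b) :=
    continuous_ofReal.comp_continuousOn
      (hf''.neg.div (hcf'.pow 2) fun x hx ↦ pow_ne_zero 2 (h0 x hx))
  have hcv' : ContinuousOn v' (uIcc a b) := by fun_prop
  have hparts := integral_mul_deriv_eq_deriv_mul hu hv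
    hcu'.intervalIntegrable hcv'.intervalIntegrable
  have huv' : ∫ x in a..b, exp (I * f x) = ∫ x in a..b, u x * v' x :=
    integral_congr fun x hx ↦ by
      have : (f' x : ℂ) ≠ 0 := ofReal_ne_zero.2 (h0 x hx)
      simp only [u, v', ofReal_inv]
      field_simp
  have hnv (x : ℝ) : ‖v x‖ = 1 := by simp [v, norm_exp_I_mul_ofReal]
  have hrest : ‖∫ x in a..b, u' x * v x‖ ≤ ∫ x in a..b, |f'' x| / f' x ^ 2 := by
    refine (intervalIntegral.norm_integral_le_integral_norm hab).trans_eq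
      (integral_congr fun x _ ↦ ?_)
    simp [hnv, u']
  calc ‖∫ x in a..b, exp (I * f x)‖
      = ‖u b * v b - u a * v a - ∫ x in a..b, u' x * v x‖ := by rw [huv', hparts]
    _ ≤ ‖u b * v b‖ + ‖u a * v a‖ + ‖∫ x in a..b, u' x * v x‖ :=
        (norm_sub_le _ _).trans (by gcongr; exact norm_sub_le _ _)
    _ ≤ |f' a|⁻¹ + |f' b|⁻¹ + ∫ x in a..b, |f'' x| / f' x ^ 2 := by
        simp only [norm_mul, hnv, u, norm_real, norm_inv, Real.norm_eq_abs, mul_one]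
        linarith

theorem norm_integral_exp_I_mul_le_of_le_abs_deriv (hab : a ≤ b) (hμ : 0 < μ)
    (hf : ∀ x ∈ Icc a b, HasDerivAt f (f' x) x) (hf' : ∀ x ∈ Icc a b, HasDerivAt f' (f'' x) x)
    (hf'' : ContinuousOn f'' (Icc a b)) (hconv : ∀ x ∈ Icc a b, 0 ≤ f'' x)
    (hlow : ∀ x ∈ Icc a b, μ ≤ |f' x|) :
    ‖∫ x in a..b, exp (I * f x)‖ ≤ 4 / μ := by
  have h0 : ∀ x ∈ Icc a b, f' x ≠ 0 := fun x hx ↦ abs_pos.1 (hμ.trans_le (hlow x hx))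
  have hcf' : ContinuousOn f' (Icc a b) := HasDerivAt.continuousOn hf'
  have hinv : ∀ x ∈ Icc a b, |(f' x)⁻¹| ≤ μ⁻¹ := fun x hx ↦ by
    rw [abs_inv]; exact inv_anti₀ hμ (hlow x hx)
  have hint : ∫ x in a..b, |f'' x| / f' x ^ 2 = (f' a)⁻¹ - (f' b)⁻¹ := by
    have hderiv : ∀ x ∈ uIcc a b, HasDerivAt (fun y ↦ -(f' y)⁻¹) (|f'' x| / f' x ^ 2) x := by
      rw [uIcc_of_le hab]
      exact fun x hx ↦ ((hf' x hx).fun_inv (h0 x hx)).fun_neg.congr_deriv <| by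
        rw [abs_of_nonneg (hconv x hx), neg_div, neg_neg]
    rw [integral_eq_sub_of_hasDerivAt hderiv]
    · ring
    · refine ContinuousOn.intervalIntegrable ?_
      rw [uIcc_of_le hab]
      exact hf''.abs.div (hcf'.pow 2) fun x hx ↦ pow_ne_zero 2 (h0 x hx)
  have hA := hinv a (left_mem_Icc.2 hab)
  have hB := hinv b (right_mem_Icc.2 hab)
  have := norm_integral_exp_I_mul_le_of_deriv_ne_zero hab hf hf' hf'' h0
  rw [hint, ← abs_inv, ← abs_inv] at this
  rw [div_eq_mul_inv]
  linarith [le_abs_self (f' a)⁻¹, neg_le_abs (f' b)⁻¹]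

theorem norm_integral_exp_I_mul_le_of_le_deriv2_of_nonneg (hab : a ≤ b) (hδ : 0 < δ)
    (hf : ∀ x ∈ Icc a b, HasDerivAt f (f' x) x) (hf' : ∀ x ∈ Icc a b, HasDerivAt f' (f'' x) x)
    (hf'' : ContinuousOn f'' (Icc a b)) (hlow : ∀ x ∈ Icc a b, δ ≤ f'' x) (ha : 0 ≤ f' a) :
    ‖∫ x in a..b, exp (I * f x)‖ ≤ 5 / √δ := by
  have hgrow : ∀ x ∈ Icc a b, δ * (x - a) ≤ f' x := fun x hx ↦ by
    have := (convex_Icc a b).mul_sub_le_image_sub_of_le_deriv (C := δ)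
      (HasDerivAt.continuousOn hf')
      (fun y hy ↦ (hf' y (interior_subset hy)).differentiableAt.differentiableWithinAt)
      (fun y hy ↦ (hf' y (interior_subset hy)).deriv ▸ hlow y (interior_subset hy))
      a (left_mem_Icc.2 hab) x hx hx.1
    linarith
  have hs : 0 < √δ := Real.sqrt_pos.2 hδ
  rcases le_total (b - a) (1 / √δ) with hshort | hlong
  · calc _ ≤ b - a := norm_integral_exp_I_mul_le_sub f hab
      _ ≤ 5 / √δ := hshort.trans (by gcongr; norm_num)
  · set c := a + 1 / √δ
    have hac : a ≤ c := by simp only [c]; linarith [one_div_pos.2 hs]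
    have hcb : c ≤ b := by simp only [c]; linarith
    have hsub : Icc c b ⊆ Icc a b := Icc_subset_Icc_left hac
    have hsteep : ∀ x ∈ Icc c b, √δ ≤ |f' x| := fun x hx ↦
      calc √δ = δ * (c - a) := by
            simp only [c, add_sub_cancel_left, mul_one_div, Real.div_sqrt]
        _ ≤ δ * (x - a) := by gcongr; exact hx.1
        _ ≤ |f' x| := (hgrow x (hsub hx)).trans (le_abs_self _)
    calc _ ≤ _ := norm_integral_exp_I_mul_le_add hac hcb
            ((HasDerivAt.continuousOn hf).mono Ioc_subset_Icc_self)
      _ ≤ (c - a) + 4 / √δ := add_le_add (norm_integral_exp_I_mul_le_sub f hac)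
            (norm_integral_exp_I_mul_le_of_le_abs_deriv hcb hs (fun x hx ↦ hf x (hsub hx))
              (fun x hx ↦ hf' x (hsub hx)) (hf''.mono hsub)
              (fun x hx ↦ hδ.le.trans (hlow x (hsub hx))) hsteep)
      _ = 5 / √δ := by simp only [c]; ring

theorem norm_integral_exp_I_mul_le_of_le_deriv2_of_nonpos (hab : a ≤ b) (hδ : 0 < δ)
    (hf : ∀ x ∈ Icc a b, HasDerivAt f (f' x) x) (hf' : ∀ x ∈ Icc a b, HasDerivAt f' (f'' x) x)
    (hf'' : ContinuousOn f'' (Icc a b)) (hlow : ∀ x ∈ Icc a b, δ ≤ f'' x) (hb : f' b ≤ 0) :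
    ‖∫ x in a..b, exp (I * f x)‖ ≤ 5 / √δ := by
  have hneg : ∀ x ∈ Icc (-b) (-a), -x ∈ Icc a b := fun x hx ↦ by
    constructor <;> linarith [hx.1, hx.2]
  have := norm_integral_exp_I_mul_le_of_le_deriv2_of_nonneg (f := fun x ↦ f (-x))
    (f' := fun x ↦ -f' (-x)) (f'' := fun x ↦ f'' (-x)) (neg_le_neg hab) hδ
    (fun x hx ↦ ((hf _ (hneg x hx)).comp x (hasDerivAt_neg x)).congr_deriv (mul_neg_one _))
    (fun x hx ↦ ((hf' _ (hneg x hx)).comp x (hasDerivAt_neg x)).neg.congr_deriv (by ring))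
    (hf''.comp continuousOn_neg hneg) (fun x hx ↦ hlow _ (hneg x hx)) (by simpa using hb)
  rwa [integral_comp_neg fun x ↦ exp (I * f x), neg_neg, neg_neg] at this

theorem norm_integral_exp_I_mul_le_of_le_deriv2 (hab : a ≤ b) (hδ : 0 < δ)
    (hf : ∀ x ∈ Icc a b, HasDerivAt f (f' x) x) (hf' : ∀ x ∈ Icc a b, HasDerivAt f' (f'' x) x)
    (hf'' : ContinuousOn f'' (Icc a b)) (hlow : ∀ x ∈ Icc a b, δ ≤ f'' x) :
    ‖∫ x in a..b, exp (I * f x)‖ ≤ 10 / √δ := by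
  have h510 : 5 / √δ ≤ 10 / √δ := by gcongr; norm_num
  rcases le_total 0 (f' a) with ha | ha
  · exact (norm_integral_exp_I_mul_le_of_le_deriv2_of_nonneg hab hδ hf hf' hf'' hlow ha).trans h510
  rcases le_total (f' b) 0 with hb | hb
  · exact (norm_integral_exp_I_mul_le_of_le_deriv2_of_nonpos hab hδ hf hf' hf'' hlow hb).trans h510
  obtain ⟨c, hc, hc0⟩ : ∃ c ∈ Icc a b, f' c = 0 :=
    intermediate_value_Icc hab (HasDerivAt.continuousOn hf') ⟨ha, hb⟩
  have hL : Icc a c ⊆ Icc a b := Icc_subset_Icc_right hc.2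
  have hR : Icc c b ⊆ Icc a b := Icc_subset_Icc_left hc.1
  calc _ ≤ _ := norm_integral_exp_I_mul_le_add hc.1 hc.2
        ((HasDerivAt.continuousOn hf).mono Ioc_subset_Icc_self)
    _ ≤ 5 / √δ + 5 / √δ := add_le_add
        (norm_integral_exp_I_mul_le_of_le_deriv2_of_nonpos hc.1 hδ (fun x hx ↦ hf x (hL hx))
          (fun x hx ↦ hf' x (hL hx)) (hf''.mono hL) (fun x hx ↦ hlow x (hL hx)) hc0.le)
        (norm_integral_exp_I_mul_le_of_le_deriv2_of_nonneg hc.2 hδ (fun x hx ↦ hf x (hR hx))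
          (fun x hx ↦ hf' x (hR hx)) (hf''.mono hR) (fun x hx ↦ hlow x (hR hx)) hc0.ge)
    _ = 10 / √δ := by ring

end VanDerCorput

section SqrtPerturbation

open Set intervalIntegral Complex

variable {h h' h'' : ℝ → ℝ} {a b l δ M R : ℝ}

theorem hasDerivAt_mul_sqrt_add {u d : ℝ} (hu : 0 < u) (hh : HasDerivAt h d u) :
    HasDerivAt (fun u ↦ l * √u + h u) (l / (2 * √u) + d) u :=
  (((Real.hasDerivAt_sqrt hu.ne').const_mul l).fun_add hh).congr_deriv (by ring)

theorem hasDerivAt_div_two_sqrt_add {u d : ℝ} (hu : 0 < u) (hh : HasDerivAt h d u) :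
    HasDerivAt (fun u ↦ l / (2 * √u) + h u) (-l / (4 * (u * √u)) + d) u := by
  have hs : √u ≠ 0 := (Real.sqrt_pos.2 hu).ne'
  have := ((((Real.hasDerivAt_sqrt hu.ne').const_mul 2).fun_inv
    (mul_ne_zero two_ne_zero hs)).const_mul l).fun_add hh
  simp only [← div_eq_mul_inv] at this
  refine this.congr_deriv ?_
  rw [mul_pow, Real.sq_sqrt hu.le]
  field_simp
  ring

theorem continuousOn_neg_div_mul_sqrt_add {s : Set ℝ} (hs : ∀ u ∈ s, 0 < u)
    (hh : ContinuousOn h s) : ContinuousOn (fun u ↦ -l / (4 * (u * √u)) + h u) s := by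
  refine ContinuousOn.add (continuousOn_const.div (by fun_prop) fun u hu ↦ ?_) hh
  have := Real.sqrt_pos.2 (hs u hu)
  have := hs u hu
  positivity

theorem norm_integral_exp_I_mul_sqrt_add_le_of_nonpos (ha : 0 < a) (hab : a ≤ b) (hδ : 0 < δ)
    (hl : l ≤ 0) (hh : ∀ u ∈ Icc a b, HasDerivAt h (h' u) u)
    (hh' : ∀ u ∈ Icc a b, HasDerivAt h' (h'' u) u) (hh'' : ContinuousOn h'' (Icc a b))
    (hlow : ∀ u ∈ Icc a b, δ ≤ h'' u) :
    ‖∫ u in a..b, exp (I * (l * √u + h u : ℝ))‖ ≤ 10 / √δ := by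
  have hpos : ∀ u ∈ Icc a b, 0 < u := fun u hu ↦ ha.trans_le hu.1
  refine norm_integral_exp_I_mul_le_of_le_deriv2 hab hδ
    (fun u hu ↦ hasDerivAt_mul_sqrt_add (hpos u hu) (hh u hu))
    (fun u hu ↦ hasDerivAt_div_two_sqrt_add (hpos u hu) (hh' u hu))
    (continuousOn_neg_div_mul_sqrt_add hpos hh'') fun u hu ↦ ?_
  have : 0 ≤ -l / (4 * (u * √u)) := by
    have := hpos u hu
    have := neg_nonneg.2 hl
    positivity
  linarith [hlow u hu]

/- The square of the first derivative dominates both `(l / √u) * (δ * u)` and `(δ * u) ^ 2`,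
hence each of the two terms of the second derivative. -/
theorem abs_div_sq_le_of_sqrt_add {u x y : ℝ} (hu : 0 < u) (hδ : 0 < δ) (hl : 0 ≤ l)
    (hx : δ * u ≤ x) (hy : |y| ≤ M * δ) :
    |-l / (4 * (u * √u)) + y| / (l / (2 * √u) + x) ^ 2 ≤ (1 / 2 + M) / δ * (1 / u ^ 2) := by
  have : 0 < √u := Real.sqrt_pos.2 hu
  have hx0 : 0 < x := (by positivity : 0 < δ * u).trans_le hx
  have hM : 0 ≤ M := nonneg_of_mul_nonneg_left ((abs_nonneg y).trans hy) hδ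
  set p := l / (2 * √u) with hp
  have hp0 : 0 ≤ p := by positivity
  have hnum : |-l / (4 * (u * √u)) + y| ≤ p / (2 * u) + M * δ := by
    refine (abs_add_le _ _).trans (add_le_add (le_of_eq ?_) hy)
    rw [neg_div, abs_neg, abs_of_nonneg (by positivity), hp]
    field_simp
    norm_num
  rw [div_le_iff₀ (by positivity)]
  calc |-l / (4 * (u * √u)) + y| ≤ p / (2 * u) + M * δ := hnum
    _ = 1 / (2 * δ * u ^ 2) * (p * (δ * u)) + M / (δ * u ^ 2) * (δ * u) ^ 2 := by
        field_simp
    _ ≤ 1 / (2 * δ * u ^ 2) * (p + x) ^ 2 + M / (δ * u ^ 2) * (p + x) ^ 2 := by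
        gcongr
        · nlinarith [mul_le_mul_of_nonneg_left hx hp0, sq_nonneg p, sq_nonneg x]
        · linarith
    _ = (1 / 2 + M) / δ * (1 / u ^ 2) * (p + x) ^ 2 := by field_simp

theorem integral_one_div_sq (ha : 0 < a) (hab : a ≤ b) :
    ∫ u in a..b, 1 / u ^ 2 = 1 / a - 1 / b := by
  have h0 : ∀ u ∈ uIcc a b, u ≠ 0 := by
    rw [uIcc_of_le hab]
    exact fun u hu ↦ (ha.trans_le hu.1).ne'
  rw [integral_eq_sub_of_hasDerivAt (f := fun u : ℝ ↦ -u⁻¹)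
    (fun u hu ↦ (hasDerivAt_inv (h0 u hu)).fun_neg.congr_deriv (by simp))]
  · ring
  · exact ContinuousOn.intervalIntegrable (continuousOn_const.div (by fun_prop)
      fun u hu ↦ pow_ne_zero 2 (h0 u hu))

theorem norm_integral_exp_I_mul_sqrt_add_le_of_nonneg (ha : 0 < a) (hab : a ≤ b) (hδ : 0 < δ)
    (hl : 0 ≤ l) (hh : ∀ u ∈ Icc a b, HasDerivAt h (h' u) u)
    (hh' : ∀ u ∈ Icc a b, HasDerivAt h' (h'' u) u) (hh'' : ContinuousOn h'' (Icc a b))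
    (hup : ∀ u ∈ Icc a b, |h'' u| ≤ M * δ) (hgrow : ∀ u ∈ Icc a b, δ * u ≤ h' u) :
    ‖∫ u in a..b, exp (I * (l * √u + h u : ℝ))‖ ≤ (5 / 2 + M) / (δ * a) := by
  have hpos : ∀ u ∈ Icc a b, 0 < u := fun u hu ↦ ha.trans_le hu.1
  have hM : 0 ≤ M := nonneg_of_mul_nonneg_left
    ((abs_nonneg _).trans (hup a (left_mem_Icc.2 hab))) hδ
  set F' : ℝ → ℝ := fun u ↦ l / (2 * √u) + h' u
  set F'' : ℝ → ℝ := fun u ↦ -l / (4 * (u * √u)) + h'' u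
  have hF' : ∀ u ∈ Icc a b, HasDerivAt F' (F'' u) u := fun u hu ↦
    hasDerivAt_div_two_sqrt_add (hpos u hu) (hh' u hu)
  have hF'' : ContinuousOn F'' (Icc a b) := continuousOn_neg_div_mul_sqrt_add hpos hh''
  have hlow : ∀ u ∈ Icc a b, δ * a ≤ F' u := fun u hu ↦
    calc δ * a ≤ δ * u := by gcongr; exact hu.1
      _ ≤ F' u := (hgrow u hu).trans (le_add_of_nonneg_left (by positivity))
  have h0 : ∀ u ∈ Icc a b, F' u ≠ 0 := fun u hu ↦
    ((by positivity : 0 < δ * a).trans_le (hlow u hu)).ne'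
  have hbdry : ∀ u ∈ Icc a b, |F' u|⁻¹ ≤ 1 / (δ * a) := fun u hu ↦ by
    rw [one_div]
    exact inv_anti₀ (by positivity) ((hlow u hu).trans (le_abs_self _))
  have hrest : ∫ u in a..b, |F'' u| / F' u ^ 2 ≤ (1 / 2 + M) / (δ * a) := by
    have hint : ContinuousOn (fun u ↦ |F'' u| / F' u ^ 2) (Icc a b) :=
      hF''.abs.div ((HasDerivAt.continuousOn hF').pow 2) fun u hu ↦ pow_ne_zero 2 (h0 u hu)
    have hint' : ContinuousOn (fun u ↦ (1 / 2 + M) / δ * (1 / u ^ 2)) (Icc a b) :=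
      continuousOn_const.mul (continuousOn_const.div (by fun_prop)
        fun u hu ↦ pow_ne_zero 2 (hpos u hu).ne')
    rw [← uIcc_of_le hab] at hint hint'
    calc _ ≤ ∫ u in a..b, (1 / 2 + M) / δ * (1 / u ^ 2) :=
          integral_mono_on hab hint.intervalIntegrable hint'.intervalIntegrable
            fun u hu ↦ abs_div_sq_le_of_sqrt_add (hpos u hu) hδ hl (hgrow u hu) (hup u hu)
      _ = (1 / 2 + M) / δ * (1 / a - 1 / b) := by
          rw [intervalIntegral.integral_const_mul, integral_one_div_sq ha hab]
      _ ≤ (1 / 2 + M) / δ * (1 / a) := by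
          gcongr
          exact sub_le_self _ (one_div_nonneg.2 (ha.le.trans hab))
      _ = (1 / 2 + M) / (δ * a) := by field_simp
  calc _ ≤ |F' a|⁻¹ + |F' b|⁻¹ + ∫ u in a..b, |F'' u| / F' u ^ 2 :=
        norm_integral_exp_I_mul_le_of_deriv_ne_zero hab
          (fun u hu ↦ hasDerivAt_mul_sqrt_add (hpos u hu) (hh u hu)) hF' hF'' h0
    _ ≤ 1 / (δ * a) + 1 / (δ * a) + (1 / 2 + M) / (δ * a) :=
        add_le_add_three (hbdry a (left_mem_Icc.2 hab)) (hbdry b (right_mem_Icc.2 hab)) hrest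
    _ = (5 / 2 + M) / (δ * a) := by ring

theorem norm_integral_exp_I_mul_sqrt_add_le (hR : 0 < R) (hδ : 0 < δ)
    (hh : ∀ u ∈ Ioc 0 R, HasDerivAt h (h' u) u) (hh' : ∀ u ∈ Ioc 0 R, HasDerivAt h' (h'' u) u)
    (hh'' : ContinuousOn h'' (Ioc 0 R)) (hlow : ∀ u ∈ Ioc 0 R, δ ≤ h'' u)
    (hup : ∀ u ∈ Ioc 0 R, h'' u ≤ M * δ) (hgrow : ∀ u ∈ Ioc 0 R, δ * u ≤ h' u)
    (l : ℝ) (ha : 0 ≤ a) (hab : a ≤ b) (hbR : b ≤ R) :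
    ‖∫ u in a..b, exp (I * (l * √u + h u : ℝ))‖ ≤ (11 + M) / √δ := by
  have : 0 < √δ := Real.sqrt_pos.2 hδ
  have hM : 0 ≤ M := nonneg_of_mul_nonneg_left
    (hδ.le.trans ((hlow R ⟨hR, le_rfl⟩).trans (hup R ⟨hR, le_rfl⟩))) hδ
  set c := a + 1 / √δ with hc
  have hδc : 1 / √δ ≤ c := le_add_of_nonneg_left ha
  have hac : a ≤ c := le_add_of_nonneg_right (by positivity)
  have hc0 : 0 < c := (by positivity : 0 < 1 / √δ).trans_le hδc
  rcases le_total b c with hbc | hcb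
  · calc _ ≤ b - a := norm_integral_exp_I_mul_le_sub _ hab
      _ ≤ 1 / √δ := by linarith
      _ ≤ (11 + M) / √δ := by gcongr; linarith
  have hsub : Icc c b ⊆ Ioc 0 R := fun u hu ↦ ⟨hc0.trans_le hu.1, hu.2.trans hbR⟩
  have hfar : ‖∫ u in c..b, exp (I * (l * √u + h u : ℝ))‖ ≤ (10 + M) / √δ := by
    rcases le_total l 0 with hl | hl
    · refine (norm_integral_exp_I_mul_sqrt_add_le_of_nonpos hc0 hcb hδ hl
        (fun u hu ↦ hh u (hsub hu)) (fun u hu ↦ hh' u (hsub hu)) (hh''.mono hsub)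
        fun u hu ↦ hlow u (hsub hu)).trans ?_
      gcongr
      linarith
    · calc _ ≤ (5 / 2 + M) / (δ * c) :=
            norm_integral_exp_I_mul_sqrt_add_le_of_nonneg hc0 hcb hδ hl
              (fun u hu ↦ hh u (hsub hu)) (fun u hu ↦ hh' u (hsub hu)) (hh''.mono hsub)
              (fun u hu ↦ (abs_of_nonneg (hδ.le.trans (hlow u (hsub hu)))).trans_le
                (hup u (hsub hu))) fun u hu ↦ hgrow u (hsub hu)
        _ ≤ (5 / 2 + M) / (δ * (1 / √δ)) := by gcongr
        _ = (5 / 2 + M) / √δ := by rw [mul_one_div, Real.div_sqrt]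
        _ ≤ (10 + M) / √δ := by gcongr; norm_num
  have hcont : ContinuousOn (fun u ↦ l * √u + h u) (Ioc a b) := by
    have : ContinuousOn h (Ioc a b) :=
      (HasDerivAt.continuousOn hh).mono (Ioc_subset_Ioc ha hbR)
    fun_prop
  calc _ ≤ _ := norm_integral_exp_I_mul_le_add hac hcb hcont
    _ ≤ (c - a) + (10 + M) / √δ := add_le_add (norm_integral_exp_I_mul_le_sub _ hac) hfar
    _ = (11 + M) / √δ := by rw [hc]; ring

end SqrtPerturbation

section SqrtDecay

open Set Metric Complex
open scoped Topology

variable {E : Type*} [NormedAddCommGroup E] [NormedSpace ℝ E] [MeasureSpace E]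
  {φ : E → ℝ} {S T : Set E}

/-- Decay `O(t^{-1/2})` of the oscillatory integrals with phase `t φ` over `S`. The bound is asked
uniformly in an added affine phase and over all compact convex pieces of `S`; the first makes the
notion insensitive to the space variable `x`, the second makes it local (convex pieces have convex
intersections). -/
def HasSqrtDecayOn (φ : E → ℝ) (S : Set E) : Prop :=
  ∃ C : ℝ, ∀ (ℓ : E →L[ℝ] ℝ) (c t : ℝ), 0 < t → ∀ T ⊆ S, IsCompact T → Convex ℝ T →
    ‖∫ ξ in T, exp (I * (ℓ ξ + c + t * φ ξ : ℝ))‖ ≤ C / √t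

namespace HasSqrtDecayOn

theorem mono (h : HasSqrtDecayOn φ T) (hST : S ⊆ T) : HasSqrtDecayOn φ S :=
  let ⟨C, hC⟩ := h
  ⟨C, fun ℓ c t ht U hU ↦ hC ℓ c t ht U (hU.trans hST)⟩

theorem neg (h : HasSqrtDecayOn φ S) : HasSqrtDecayOn (fun ξ ↦ -φ ξ) S := by
  obtain ⟨C, hC⟩ := h
  refine ⟨C, fun ℓ c t ht T hTS hT hT' ↦ ?_⟩
  refine le_of_eq_of_le ?_ (hC (-ℓ) (-c) t ht T hTS hT hT')
  rw [← norm_conj, ← integral_conj]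
  refine congrArg norm (integral_congr_ae (.of_forall fun ξ ↦ ?_))
  simp only [← exp_conj, map_mul, conj_I, conj_ofReal, neg_apply]
  push_cast
  ring_nf

theorem exists_norm_integral_le [IsFiniteMeasureOnCompacts (volume : Measure E)]
    (h : HasSqrtDecayOn φ S) (hS : IsCompact S) (hS' : Convex ℝ S) :
    ∃ C > 0, ∀ (ℓ : E →L[ℝ] ℝ) (c t : ℝ),
      ‖∫ ξ in S, exp (I * (ℓ ξ + c + t * φ ξ : ℝ))‖ ≤ C * (1 + |t|) ^ (-(1 / 2 : ℝ)) := by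
  obtain ⟨C₁, hC₁⟩ := h
  obtain ⟨C₂, hC₂⟩ := neg ⟨C₁, hC₁⟩
  set A := |C₁| + |C₂| + volume.real S + 1
  have hA : 0 ≤ volume.real S := measureReal_nonneg
  refine ⟨√2 * A, by positivity, fun ℓ c t ↦ ?_⟩
  rw [Real.rpow_neg (by positivity), ← Real.sqrt_eq_rpow, ← div_eq_mul_inv]
  rcases le_total |t| 1 with ht | ht
  · calc _ ≤ 1 * volume.real S := norm_setIntegral_le_of_norm_le_const hS.measure_lt_top
          fun ξ _ ↦ (norm_exp_I_mul_ofReal _).le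
      _ ≤ A := by linarith [abs_nonneg C₁, abs_nonneg C₂]
      _ ≤ √2 * A / √(1 + |t|) := by
          rw [le_div_iff₀ (by positivity), mul_comm]
          gcongr
          linarith
  · have hdecay : ‖∫ ξ in S, exp (I * (ℓ ξ + c + t * φ ξ : ℝ))‖ ≤ A / √|t| := by
      rcases le_total 0 t with h0 | h0
      · rw [abs_of_nonneg h0] at ht ⊢
        refine (hC₁ ℓ c t (by linarith) S subset_rfl hS hS').trans ?_
        gcongr
        linarith [le_abs_self C₁, abs_nonneg C₂]
      · rw [abs_of_nonpos h0] at ht ⊢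
        have := hC₂ ℓ c (-t) (by linarith) S subset_rfl hS hS'
        simp only [neg_mul_neg] at this
        refine this.trans ?_
        gcongr
        linarith [le_abs_self C₂, abs_nonneg C₁]
    calc _ ≤ A / √|t| := hdecay
      _ = √2 * A / √(2 * |t|) := by
          rw [Real.sqrt_mul zero_le_two, mul_div_mul_left _ _ (by positivity)]
      _ ≤ √2 * A / √(1 + |t|) := by
          gcongr
          linarith

variable [BorelSpace E]

theorem preimage_sub_right [(volume : Measure E).IsAddRightInvariant] {p : E}
    (h : HasSqrtDecayOn (fun ξ ↦ φ (ξ + p)) S) : HasSqrtDecayOn φ ((· - p) ⁻¹' S) := by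
  obtain ⟨C, hC⟩ := h
  refine ⟨C, fun ℓ c t ht T hTS hT hT' ↦ ?_⟩
  have := hC ℓ (ℓ p + c) t ht ((· + p) ⁻¹' T) (fun ξ hξ ↦ by simpa using hTS hξ)
    ((Homeomorph.addRight p).isCompact_preimage.2 hT) (hT'.translate_preimage_left p)
  rw [← (measurePreserving_add_right volume p).setIntegral_preimage_emb
    (measurableEmbedding_addRight p)]
  convert this using 7 with ξ
  rw [map_add]
  ring

/- Inclusion–exclusion: the intersections of the convex pieces are again convex. -/
theorem biUnion [IsFiniteMeasureOnCompacts (volume : Measure E)] {ι : Type*} {s : Finset ι}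
    {B : ι → Set E} (hφ : Continuous φ) (hclosed : ∀ i ∈ s, IsClosed (B i))
    (hconv : ∀ i ∈ s, Convex ℝ (B i)) (h : ∀ i ∈ s, HasSqrtDecayOn φ (B i)) :
    HasSqrtDecayOn φ (⋃ i ∈ s, B i) := by
  choose! C hC using h
  refine ⟨(s.powerset.filter (·.Nonempty)).card * ∑ i ∈ s, |C i|,
    fun ℓ c t ht T hTs hT hT' ↦ ?_⟩
  have hcpt : ∀ i ∈ s, IsCompact (T ∩ B i) := fun i hi ↦ hT.inter_right (hclosed i hi)
  have hTB : T = ⋃ i ∈ s, T ∩ B i := by rwa [← inter_iUnion₂, eq_comm, inter_eq_left]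
  have hpiece : ∀ u ∈ s.powerset.filter (·.Nonempty),
      ‖(-1 : ℝ) ^ (u.card + 1) • ∫ ξ in ⋂ i ∈ u, T ∩ B i, exp (I * (ℓ ξ + c + t * φ ξ : ℝ))‖ ≤
        (∑ i ∈ s, |C i|) / √t := fun u hu ↦ by
    obtain ⟨hus, j, hju⟩ := Finset.mem_filter.1 hu
    rw [Finset.mem_powerset] at hus
    have hsub : ⋂ i ∈ u, T ∩ B i ⊆ T ∩ B j := biInter_subset_of_mem hju
    rw [norm_smul, norm_pow, norm_neg, norm_one, one_pow, one_mul]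
    calc _ ≤ C j / √t := hC j (hus hju) ℓ c t ht _ (hsub.trans inter_subset_right)
          ((hcpt j (hus hju)).of_isClosed_subset
            (isClosed_biInter fun i hi ↦ (hcpt i (hus hi)).isClosed) hsub)
          (convex_iInter₂ fun i hi ↦ hT'.inter (hconv i (hus hi)))
      _ ≤ (∑ i ∈ s, |C i|) / √t := by
          gcongr
          exact (le_abs_self _).trans
            (Finset.single_le_sum (f := fun i ↦ |C i|) (fun i _ ↦ abs_nonneg _) (hus hju))
  rw [hTB, integral_biUnion_eq_sum_powerset (fun i hi ↦ (hcpt i hi).measurableSet) fun i hi ↦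
    ContinuousOn.integrableOn_compact (hcpt i hi) (by fun_prop)]
  calc _ ≤ _ := norm_sum_le_of_le _ hpiece
    _ = _ := by rw [Finset.sum_const, nsmul_eq_mul, mul_div_assoc]

theorem of_isCompact [IsFiniteMeasureOnCompacts (volume : Measure E)] (hS : IsCompact S)
    (hφ : Continuous φ) (h : ∀ p ∈ S, ∃ U ∈ 𝓝 p, HasSqrtDecayOn φ U) : HasSqrtDecayOn φ S := by
  have hball : ∀ p ∈ S, ∃ r > 0, HasSqrtDecayOn φ (closedBall p r) := fun p hp ↦ by
    obtain ⟨U, hU, hdec⟩ := h p hp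
    obtain ⟨r, hr, hrU⟩ := nhds_basis_closedBall.mem_iff.1 hU
    exact ⟨r, hr, hdec.mono hrU⟩
  choose! r hr hdec using hball
  obtain ⟨s, hsS, hSs⟩ := hS.elim_nhds_subcover (fun p ↦ closedBall p (r p))
    fun p hp ↦ closedBall_mem_nhds p (hr p hp)
  exact (biUnion hφ (fun _ _ ↦ isClosed_closedBall) (fun p _ ↦ convex_closedBall p (r p))
    fun p hp ↦ hdec p (hsS p hp)).mono hSs

end HasSqrtDecayOn

end SqrtDecay

section ConvexSlices

open Set Metric

theorem norm_setIntegral_le_of_forall_Icc {F : Type*} [NormedAddCommGroup F] [NormedSpace ℝ F]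
    {f : ℝ → F} {T : Set ℝ} {K : ℝ} (hT : IsCompact T) (hT' : Convex ℝ T) (hK : 0 ≤ K)
    (h : ∀ a b, a ≤ b → Icc a b = T → ‖∫ x in a..b, f x‖ ≤ K) : ‖∫ x in T, f x‖ ≤ K := by
  rcases T.eq_empty_or_nonempty with rfl | hne
  · simpa using hK
  have hIcc := eq_Icc_of_connected_compact ⟨hne, hT'.isPreconnected⟩ hT
  have hle : sInf T ≤ sSup T := nonempty_Icc.1 (hIcc ▸ hne)
  rw [hIcc, integral_Icc_eq_integral_Ioc, ← intervalIntegral.integral_of_le hle]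
  exact h _ _ hle hIcc.symm

variable {E : Type*} [NormedAddCommGroup E] [NormedSpace ℝ E] [FiniteDimensional ℝ E]
  [MeasureSpace E] [BorelSpace E] [(volume : Measure E).IsAddHaarMeasure]
  {F : Type*} [NormedAddCommGroup F] [NormedSpace ℝ F] [CompleteSpace F]

theorem integral_integral_add_smul {g : E → F} (hg : Integrable g) (v : E) (ν : Measure ℝ)
    [IsProbabilityMeasure ν] : ∫ ξ, ∫ s, g (ξ + s • v) ∂ν = ∫ ξ, g ξ := by
  have hshear : MeasurePreserving (fun p : ℝ × E ↦ (p.1, p.2 + p.1 • v))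
      (ν.prod volume) (ν.prod volume) :=
    (MeasurePreserving.id ν).skew_product (g := fun s ξ ↦ ξ + s • v)
      (by fun_prop : Continuous fun p : ℝ × E ↦ p.2 + p.1 • v).measurable
      (.of_forall fun s ↦ map_add_right_eq_self volume (s • v))
  have hint : Integrable (fun p : ℝ × E ↦ g (p.2 + p.1 • v)) (ν.prod volume) :=
    hshear.integrable_comp_of_integrable (hg.comp_snd ν)
  rw [← integral_integral_swap hint]
  simp only [integral_add_right_eq_self, integral_const, probReal_univ, one_smul]

theorem norm_setIntegral_le_of_forall_add_smul {g : E → F} {T : Set E} {x v : E} {r K : ℝ}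
    (hT : MeasurableSet T) (hTr : T ⊆ closedBall x r) (hg : IntegrableOn g T)
    (hK : ∀ ξ, ‖∫ s in Icc (0 : ℝ) 1 ∩ (fun s ↦ ξ + s • v) ⁻¹' T, g (ξ + s • v)‖ ≤ K) :
    ‖∫ ξ in T, g ξ‖ ≤ K * volume.real (closedBall x (r + ‖v‖)) := by
  set slice : E → F := fun ξ ↦ ∫ s in Icc (0 : ℝ) 1 ∩ (fun s ↦ ξ + s • v) ⁻¹' T, g (ξ + s • v)
  have hslice : ∫ ξ, slice ξ = ∫ ξ in T, g ξ := by
    have : IsProbabilityMeasure (volume.restrict (Icc (0 : ℝ) 1)) := ⟨by simp⟩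
    rw [← integral_indicator hT, ← integral_integral_add_smul (hg.integrable_indicator hT) v
      (volume.restrict (Icc (0 : ℝ) 1))]
    refine integral_congr_ae (.of_forall fun ξ ↦ ?_)
    exact (setIntegral_indicator
      ((by fun_prop : Continuous fun s : ℝ ↦ ξ + s • v).measurable hT)).symm
  have hsupp : ∀ ξ ∉ closedBall x (r + ‖v‖), slice ξ = 0 := fun ξ hξ ↦ by
    have : Icc (0 : ℝ) 1 ∩ (fun s ↦ ξ + s • v) ⁻¹' T = ∅ := by
      refine eq_empty_of_forall_notMem fun s ⟨hs, hsT⟩ ↦ hξ ?_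
      calc dist ξ x ≤ dist ξ (ξ + s • v) + dist (ξ + s • v) x := dist_triangle _ _ _
        _ ≤ ‖v‖ + r := by
            refine add_le_add ?_ (hTr hsT)
            rw [dist_self_add_right, norm_smul, Real.norm_of_nonneg hs.1]
            exact mul_le_of_le_one_left (norm_nonneg v) hs.2
        _ = r + ‖v‖ := add_comm _ _
    simp only [slice, this, setIntegral_empty]
  rw [← hslice, ← setIntegral_eq_integral_of_forall_compl_eq_zero hsupp]
  exact norm_setIntegral_le_of_norm_le_const measure_closedBall_lt_top fun ξ _ ↦ hK ξ

end ConvexSlices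

section LineDeriv

open Set Metric Complex
open scoped Topology

variable {E : Type*} [NormedAddCommGroup E] [NormedSpace ℝ E]

theorem hasDerivAt_comp_add_smul {φ φ' : E → ℝ} {v : E} (h : ∀ ξ, HasLineDerivAt ℝ φ (φ' ξ) ξ v)
    (ξ : E) (s : ℝ) : HasDerivAt (fun s : ℝ ↦ φ (ξ + s • v)) (φ' (ξ + s • v)) s := by
  have hshift := HasDerivAt.comp_sub_const s s (by rw [sub_self]; exact h (ξ + s • v))
  simpa only [add_assoc, ← add_smul, add_sub_cancel] using hshift

variable [FiniteDimensional ℝ E]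
  [MeasureSpace E] [BorelSpace E] [(volume : Measure E).IsAddHaarMeasure]
  {φ φ₁ φ₂ : E → ℝ} {v : E} {S : Set E}

theorem HasSqrtDecayOn.of_le_lineDeriv2 {δ : ℝ} (hφ : Continuous φ)
    (h₁ : ∀ ξ, HasLineDerivAt ℝ φ (φ₁ ξ) ξ v) (h₂ : ∀ ξ, HasLineDerivAt ℝ φ₁ (φ₂ ξ) ξ v)
    (hφ₂ : Continuous φ₂) (hδ : 0 < δ) (hS : Bornology.IsBounded S) (hlow : ∀ ξ ∈ S, δ ≤ φ₂ ξ) :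
    HasSqrtDecayOn φ S := by
  obtain ⟨r, hr⟩ := hS.subset_closedBall 0
  refine ⟨10 / √δ * volume.real (closedBall (0 : E) (r + ‖v‖)), fun ℓ c t ht T hTS hT hT' ↦ ?_⟩
  have hslice (ξ : E) : ‖∫ s in Icc (0 : ℝ) 1 ∩ (fun s ↦ ξ + s • v) ⁻¹' T,
      exp (I * (ℓ (ξ + s • v) + c + t * φ (ξ + s • v) : ℝ))‖ ≤ 10 / √(t * δ) := by
    have hline : Continuous fun s : ℝ ↦ ξ + s • v := by fun_prop
    refine norm_setIntegral_le_of_forall_Icc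
      (isCompact_Icc.inter_right (hT.isClosed.preimage hline)) ((convex_Icc 0 1).inter ?_)
      (by positivity) fun a b hab hIcc ↦ ?_
    · exact (hT'.translate_preimage_right ξ).linear_preimage (LinearMap.toSpanSingleton ℝ E v)
    refine norm_integral_exp_I_mul_le_of_le_deriv2 (f' := fun s ↦ ℓ v + t * φ₁ (ξ + s • v))
      (f'' := fun s ↦ t * φ₂ (ξ + s • v)) hab (by positivity) (fun s _ ↦ ?_) (fun s _ ↦ ?_)
      (by fun_prop) fun s hs ↦ ?_
    · have hℓ : HasDerivAt (fun s : ℝ ↦ ℓ (ξ + s • v)) (ℓ v) s := by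
        simpa using (hasDerivAt_id s).mul_const (ℓ v)
      exact (hℓ.add_const c).fun_add ((hasDerivAt_comp_add_smul h₁ ξ s).const_mul t)
    · exact ((hasDerivAt_comp_add_smul h₂ ξ s).const_mul t).const_add _
    · have hsT : s ∈ Icc (0 : ℝ) 1 ∩ (fun s ↦ ξ + s • v) ⁻¹' T := hIcc ▸ hs
      gcongr
      exact hlow _ (hTS hsT.2)
  calc _ ≤ 10 / √(t * δ) * volume.real (closedBall (0 : E) (r + ‖v‖)) :=
        norm_setIntegral_le_of_forall_add_smul hT.measurableSet (hTS.trans hr)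
          (ContinuousOn.integrableOn_compact hT (by fun_prop)) hslice
    _ = 10 / √δ * volume.real (closedBall (0 : E) (r + ‖v‖)) / √t := by
        rw [Real.sqrt_mul ht.le]
        ring

theorem exists_mem_nhds_hasSqrtDecayOn_of_lineDeriv2_pos (hφ : Continuous φ)
    (h₁ : ∀ ξ, HasLineDerivAt ℝ φ (φ₁ ξ) ξ v) (h₂ : ∀ ξ, HasLineDerivAt ℝ φ₁ (φ₂ ξ) ξ v)
    (hφ₂ : Continuous φ₂) {p : E} (hp : 0 < φ₂ p) : ∃ U ∈ 𝓝 p, HasSqrtDecayOn φ U :=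
  ⟨{ξ | φ₂ p / 2 < φ₂ ξ} ∩ ball p 1,
    Filter.inter_mem ((isOpen_lt continuous_const hφ₂).mem_nhds (half_lt_self hp))
      (ball_mem_nhds p one_pos),
    .of_le_lineDeriv2 hφ h₁ h₂ hφ₂ (half_pos hp) (isBounded_ball.subset inter_subset_right)
      fun _ hξ ↦ hξ.1.le⟩

theorem exists_mem_nhds_hasSqrtDecayOn_of_lineDeriv2_ne_zero (hφ : Continuous φ)
    (h₁ : ∀ ξ, HasLineDerivAt ℝ φ (φ₁ ξ) ξ v) (h₂ : ∀ ξ, HasLineDerivAt ℝ φ₁ (φ₂ ξ) ξ v)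
    (hφ₂ : Continuous φ₂) {p : E} (hp : φ₂ p ≠ 0) : ∃ U ∈ 𝓝 p, HasSqrtDecayOn φ U := by
  rcases hp.lt_or_gt with hneg | hpos
  · obtain ⟨U, hU, hdec⟩ := exists_mem_nhds_hasSqrtDecayOn_of_lineDeriv2_pos
      (φ := fun ξ ↦ -φ ξ) (φ₁ := fun ξ ↦ -φ₁ ξ) (φ₂ := fun ξ ↦ -φ₂ ξ) hφ.neg
      (fun ξ ↦ HasDerivAt.fun_neg (h₁ ξ)) (fun ξ ↦ HasDerivAt.fun_neg (h₂ ξ)) hφ₂.neg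
      (neg_pos.2 hneg)
    exact ⟨U, hU, by simpa only [neg_neg] using hdec.neg⟩
  · exact exists_mem_nhds_hasSqrtDecayOn_of_lineDeriv2_pos hφ h₁ h₂ hφ₂ hpos

end LineDeriv

section PolarCoordinates

open Set
open scoped Real

variable {F : Type*} [NormedAddCommGroup F] [NormedSpace ℝ F]

theorem integral_smul_eq_integral_comp_sqrt (g : ℝ → F) {a b : ℝ} (ha : 0 ≤ a) (hab : a ≤ b) :
    ∫ r in a..b, r • g r = (2⁻¹ : ℝ) • ∫ u in a ^ 2..b ^ 2, g (√u) := by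
  have hsq := intervalIntegral.integral_deriv_smul_comp_of_deriv_nonneg (a := a) (b := b)
    (f := fun r ↦ r ^ 2) (f' := fun r ↦ 2 * r) (g := fun u ↦ g (√u)) (by fun_prop)
    (fun r _ ↦ by simpa using hasDerivAt_pow 2 r)
    (fun r hr ↦ by rw [min_eq_left hab] at hr; linarith [hr.1])
  rw [← hsq, ← intervalIntegral.integral_smul]
  refine intervalIntegral.integral_congr fun r hr ↦ ?_
  rw [uIcc_of_le hab] at hr
  simp [smul_smul, Real.sqrt_sq (ha.trans hr.1)]

theorem integral_eq_integral_integral_polar {f : ℝ × ℝ → F} (hf : Integrable f) :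
    ∫ p, f p = ∫ θ in Ioo (-π) π, ∫ r in Ioi 0, r • f (r * Real.cos θ, r * Real.sin θ) := by
  have hint : IntegrableOn (fun p : ℝ × ℝ ↦ |p.1| • f (polarCoord.symm p)) polarCoord.target := by
    simpa only [det_fderivPolarCoordSymm] using
      (integrableOn_image_iff_integrableOn_abs_det_fderiv_smul volume
        polarCoord.open_target.measurableSet
        (fun p _ ↦ (hasFDerivAt_polarCoord_symm p).hasFDerivWithinAt)
        polarCoord.symm.injOn f).1 hf.integrableOn
  replace hint : IntegrableOn (fun p : ℝ × ℝ ↦ p.1 • f (polarCoord.symm p)) polarCoord.target :=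
    hint.congr_fun (fun p hp ↦ by simp only [abs_of_pos (mem_Ioi.1 hp.1)])
      polarCoord.open_target.measurableSet
  rw [← integral_comp_polarCoord_symm]
  rw [IntegrableOn, polarCoord_target, Measure.volume_eq_prod, ← Measure.prod_restrict] at hint
  rw [polarCoord_target, Measure.volume_eq_prod, ← Measure.prod_restrict, integral_prod_symm _ hint]
  rfl

theorem norm_setIntegral_le_of_forall_ray {g : ℝ × ℝ → F} {T : Set (ℝ × ℝ)} {K : ℝ}
    (hT : MeasurableSet T) (hg : IntegrableOn g T)
    (hK : ∀ θ, ‖∫ r in Ici 0 ∩ (fun r ↦ (r * Real.cos θ, r * Real.sin θ)) ⁻¹' T,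
      r • g (r * Real.cos θ, r * Real.sin θ)‖ ≤ K) :
    ‖∫ ξ in T, g ξ‖ ≤ 2 * π * K := by
  rw [← integral_indicator hT, integral_eq_integral_integral_polar (hg.integrable_indicator hT)]
  have hray (θ : ℝ) :
      ‖∫ r in Ioi 0, r • T.indicator g (r * Real.cos θ, r * Real.sin θ)‖ ≤ K := by
    refine le_of_eq_of_le ?_ (hK θ)
    have hm : MeasurableSet ((fun r : ℝ ↦ (r * Real.cos θ, r * Real.sin θ)) ⁻¹' T) :=
      (by fun_prop : Continuous fun r : ℝ ↦ (r * Real.cos θ, r * Real.sin θ)).measurable hT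
    rw [← integral_Ici_eq_integral_Ioi, ← setIntegral_indicator hm]
    simp only [indicator, smul_ite, smul_zero]
    rfl
  calc _ ≤ K * volume.real (Ioo (-π) π) :=
        norm_setIntegral_le_of_norm_le_const measure_Ioo_lt_top fun θ _ ↦ hray θ
    _ = 2 * π * K := by
        rw [Real.volume_real_Ioo_of_le (by linarith [Real.pi_pos])]
        ring

end PolarCoordinates

section RadialDecay

open Set Complex

variable {δ M R : ℝ}

theorem norm_integral_smul_exp_I_mul_le {g h' h'' : ℝ → ℝ} (hR : 0 < R) (hδ : 0 < δ)
    (hg : ∀ u ∈ Ioc 0 R, HasDerivAt (fun u ↦ g √u) (h' u) u)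
    (hh' : ∀ u ∈ Ioc 0 R, HasDerivAt h' (h'' u) u) (hh'' : ContinuousOn h'' (Ioc 0 R))
    (hlow : ∀ u ∈ Ioc 0 R, δ ≤ h'' u) (hup : ∀ u ∈ Ioc 0 R, h'' u ≤ M * δ)
    (hgrow : ∀ u ∈ Ioc 0 R, δ * u ≤ h' u) (l : ℝ) {a b : ℝ} (ha : 0 ≤ a) (hab : a ≤ b)
    (hbR : b ^ 2 ≤ R) :
    ‖∫ r in a..b, r • exp (I * (l * r + g r : ℝ))‖ ≤ 2⁻¹ * ((11 + M) / √δ) := by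
  rw [integral_smul_eq_integral_comp_sqrt (fun r ↦ exp (I * (l * r + g r : ℝ))) ha hab, norm_smul,
    Real.norm_of_nonneg (by norm_num)]
  gcongr
  exact norm_integral_exp_I_mul_sqrt_add_le hR hδ hg hh' hh'' hlow hup hgrow l (sq_nonneg a)
    (by gcongr) hbR

variable {φ : ℝ × ℝ → ℝ} {h' h'' : ℝ → ℝ → ℝ}

theorem HasSqrtDecayOn.of_polar (hφ : Continuous φ) (hR : 0 < R) (hδ : 0 < δ)
    (hh : ∀ θ, ∀ u ∈ Ioc 0 R,
      HasDerivAt (fun u ↦ φ (√u * Real.cos θ, √u * Real.sin θ)) (h' θ u) u)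
    (hh' : ∀ θ, ∀ u ∈ Ioc 0 R, HasDerivAt (h' θ) (h'' θ u) u)
    (hh'' : ∀ θ, ContinuousOn (h'' θ) (Ioc 0 R)) (hlow : ∀ θ, ∀ u ∈ Ioc 0 R, δ ≤ h'' θ u)
    (hup : ∀ θ, ∀ u ∈ Ioc 0 R, h'' θ u ≤ M * δ) (hgrow : ∀ θ, ∀ u ∈ Ioc 0 R, δ * u ≤ h' θ u) :
    HasSqrtDecayOn φ {p | p.1 ^ 2 + p.2 ^ 2 ≤ R} := by
  refine ⟨2 * Real.pi * (2⁻¹ * ((11 + M) / √δ)), fun ℓ c t ht T hTS hT hT' ↦ ?_⟩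
  have hM : 0 ≤ M := nonneg_of_mul_nonneg_left
    (hδ.le.trans ((hlow 0 R ⟨hR, le_rfl⟩).trans (hup 0 R ⟨hR, le_rfl⟩))) hδ
  have hray (θ : ℝ) : ‖∫ r in Ici 0 ∩ (fun r ↦ (r * Real.cos θ, r * Real.sin θ)) ⁻¹' T,
      r • exp (I * (ℓ (r * Real.cos θ, r * Real.sin θ) + c +
        t * φ (r * Real.cos θ, r * Real.sin θ) : ℝ))‖ ≤ 2⁻¹ * ((11 + M) / √(t * δ)) := by
    set N := Ici 0 ∩ (fun r ↦ (r * Real.cos θ, r * Real.sin θ)) ⁻¹' T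
    have hcont : Continuous fun r : ℝ ↦ (r * Real.cos θ, r * Real.sin θ) := by fun_prop
    have hle : ∀ r ∈ N, r ^ 2 ≤ R := fun r hr ↦ by
      have hmem : (r * Real.cos θ) ^ 2 + (r * Real.sin θ) ^ 2 ≤ R := hTS hr.2
      nlinarith [Real.cos_sq_add_sin_sq θ]
    have hℓ (r : ℝ) : ℓ (r * Real.cos θ, r * Real.sin θ) = ℓ (Real.cos θ, Real.sin θ) * r :=
      (ℓ.map_smul r (Real.cos θ, Real.sin θ)).trans (mul_comm _ _)
    refine norm_setIntegral_le_of_forall_Icc ?_ ?_ (by positivity) fun a b hab hIcc ↦ ?_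
    · exact isCompact_Icc.of_isClosed_subset (isClosed_Ici.inter (hT.isClosed.preimage hcont))
        fun r hr ↦ ⟨hr.1, Real.le_sqrt_of_sq_le (hle r hr)⟩
    · exact (convex_Ici 0).inter (hT'.linear_preimage
        (LinearMap.toSpanSingleton ℝ (ℝ × ℝ) (Real.cos θ, Real.sin θ)))
    have ha : a ∈ N := hIcc ▸ left_mem_Icc.2 hab
    have hb : b ∈ N := hIcc ▸ right_mem_Icc.2 hab
    simp only [hℓ, add_assoc]
    refine norm_integral_smul_exp_I_mul_le hR (mul_pos ht hδ)
      (g := fun r ↦ c + t * φ (r * Real.cos θ, r * Real.sin θ))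
      (fun u hu ↦ ((hh θ u hu).const_mul t).const_add c) (fun u hu ↦ (hh' θ u hu).const_mul t)
      (by fun_prop) (fun u hu ↦ ?_) (fun u hu ↦ ?_) (fun u hu ↦ ?_) _ ha.1 hab (hle b hb)
    · gcongr
      exact hlow θ u hu
    · nlinarith [hup θ u hu]
    · nlinarith [hgrow θ u hu]
  calc _ ≤ 2 * Real.pi * (2⁻¹ * ((11 + M) / √(t * δ))) :=
        norm_setIntegral_le_of_forall_ray hT.measurableSet
          (ContinuousOn.integrableOn_compact hT (by fun_prop)) hray
    _ = _ := by
        rw [Real.sqrt_mul ht.le]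
        ring

end RadialDecay

section LatticePhase

/-- The phase `(κ - 2 cos ξ₁ - 2 cos ξ₂)²`: completing the square, `ω⁴ + γ ω²` is of this form with
`κ = 4 + γ / 2`, up to an additive constant. -/
noncomputable def latticePhase (κ : ℝ) (ξ : ℝ × ℝ) : ℝ :=
  (κ - 2 * Real.cos ξ.1 - 2 * Real.cos ξ.2) ^ 2

@[fun_prop]
theorem continuous_latticePhase (κ : ℝ) : Continuous (latticePhase κ) := by
  unfold latticePhase
  fun_prop

theorem hasDerivAt_add_mul_const (a b s : ℝ) : HasDerivAt (fun s ↦ a + s * b) b s := by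
  simpa using ((hasDerivAt_id s).mul_const b).const_add a

theorem hasLineDerivAt_sub_two_mul_cos (κ : ℝ) (v ξ : ℝ × ℝ) :
    HasLineDerivAt ℝ (fun ξ : ℝ × ℝ ↦ κ - 2 * Real.cos ξ.1 - 2 * Real.cos ξ.2)
      (2 * (v.1 * Real.sin ξ.1 + v.2 * Real.sin ξ.2)) ξ v := by
  refine ((((hasDerivAt_add_mul_const ξ.1 v.1 0).cos.const_mul 2).const_sub κ).sub
    ((hasDerivAt_add_mul_const ξ.2 v.2 0).cos.const_mul 2)).congr_deriv ?_
  ring_nf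

theorem hasLineDerivAt_latticePhase (κ : ℝ) (v ξ : ℝ × ℝ) :
    HasLineDerivAt ℝ (latticePhase κ) (4 * (κ - 2 * Real.cos ξ.1 - 2 * Real.cos ξ.2) *
      (v.1 * Real.sin ξ.1 + v.2 * Real.sin ξ.2)) ξ v := by
  refine (HasDerivAt.pow (hasLineDerivAt_sub_two_mul_cos κ v ξ) 2).congr_deriv ?_
  simp only [Nat.cast_ofNat, zero_smul, add_zero, Nat.add_one_sub_one, pow_one]
  ring

theorem hasLineDerivAt_lineDeriv_latticePhase (κ : ℝ) (v ξ : ℝ × ℝ) :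
    HasLineDerivAt ℝ
      (fun ξ ↦ 4 * (κ - 2 * Real.cos ξ.1 - 2 * Real.cos ξ.2) *
        (v.1 * Real.sin ξ.1 + v.2 * Real.sin ξ.2))
      (8 * (v.1 * Real.sin ξ.1 + v.2 * Real.sin ξ.2) ^ 2 +
        4 * (κ - 2 * Real.cos ξ.1 - 2 * Real.cos ξ.2) *
          (v.1 ^ 2 * Real.cos ξ.1 + v.2 ^ 2 * Real.cos ξ.2)) ξ v := by
  have hsin := ((hasDerivAt_add_mul_const ξ.1 v.1 0).sin.const_mul v.1).add
    ((hasDerivAt_add_mul_const ξ.2 v.2 0).sin.const_mul v.2)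
  refine ((HasDerivAt.const_mul 4 (hasLineDerivAt_sub_two_mul_cos κ v ξ)).mul hsin).congr_deriv ?_
  simp only [Pi.add_apply, zero_mul, add_zero, zero_smul]
  ring

theorem latticePhase_add_eq_of_hessian_eq_zero {κ : ℝ} (hκ : κ ≠ 0) {p : ℝ × ℝ}
    (hp : ∀ v : ℝ × ℝ, 8 * (v.1 * Real.sin p.1 + v.2 * Real.sin p.2) ^ 2 +
      4 * (κ - 2 * Real.cos p.1 - 2 * Real.cos p.2) *
        (v.1 ^ 2 * Real.cos p.1 + v.2 ^ 2 * Real.cos p.2) = 0) (ξ : ℝ × ℝ) :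
    latticePhase κ (ξ + p) = latticePhase 4 ξ := by
  obtain ⟨a, b⟩ := p
  have hab := hp (1, 1)
  have ha := hp (1, 0)
  have hb := hp (0, 1)
  simp only [one_mul, zero_mul, one_pow, zero_add, add_zero, ne_eq, OfNat.ofNat_ne_zero,
    not_false_eq_true, zero_pow] at hab ha hb
  have ha' := Real.sin_sq_add_cos_sq a
  have hb' := Real.sin_sq_add_cos_sq b
  have hsin : Real.sin a * Real.sin b = 0 := by linarith
  have hcrit : Real.sin a = 0 ∧ Real.sin b = 0 ∧ κ - 2 * Real.cos a - 2 * Real.cos b = 0 := by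
    rcases mul_eq_zero.1 hsin with h | h <;> grind
  obtain ⟨hsa, hsb, hm⟩ := hcrit
  have hcos : Real.cos a = Real.cos b := by grind
  simp only [latticePhase, Prod.fst_add, Prod.snd_add, Real.cos_add, hsa, hsb]
  grind

end LatticePhase

section RadialSymbol

open Set

/-- The symbol `ω²` of the lattice Laplacian along the ray of angle `θ`, in the variable
`u = r²`. -/
noncomputable def radialSymbol (θ u : ℝ) : ℝ :=
  (2 - 2 * Real.cos (√u * Real.cos θ)) + (2 - 2 * Real.cos (√u * Real.sin θ))

/-- The derivative of `radialSymbol θ`. -/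
noncomputable def radialSymbolDeriv (θ u : ℝ) : ℝ :=
  (√u * Real.cos θ * Real.sin (√u * Real.cos θ) +
    √u * Real.sin θ * Real.sin (√u * Real.sin θ)) / u

/-- The second derivative of `radialSymbol θ`. -/
noncomputable def radialSymbolDeriv2 (θ u : ℝ) : ℝ :=
  (√u * Real.cos θ * (√u * Real.cos θ * Real.cos (√u * Real.cos θ) - Real.sin (√u * Real.cos θ)) +
    √u * Real.sin θ * (√u * Real.sin θ * Real.cos (√u * Real.sin θ) - Real.sin (√u * Real.sin θ)))
      / (2 * u ^ 2)

variable {θ u : ℝ}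

theorem hasDerivAt_radialSymbol (hu : 0 < u) :
    HasDerivAt (radialSymbol θ) (radialSymbolDeriv θ u) u := by
  have hsqrt (c : ℝ) : HasDerivAt (fun u ↦ √u * c) (1 / (2 * √u) * c) u :=
    (Real.hasDerivAt_sqrt hu.ne').mul_const c
  have hcos (c : ℝ) := ((hsqrt c).cos.const_mul 2).const_sub 2
  refine ((hcos (Real.cos θ)).add (hcos (Real.sin θ))).congr_deriv ?_
  have := Real.sqrt_pos.2 hu
  have hsq := Real.sq_sqrt hu.le
  rw [radialSymbolDeriv]
  field_simp
  grind

theorem hasDerivAt_radialSymbolDeriv (hu : 0 < u) :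
    HasDerivAt (radialSymbolDeriv θ) (radialSymbolDeriv2 θ u) u := by
  have hsqrt (c : ℝ) : HasDerivAt (fun u ↦ √u * c) (1 / (2 * √u) * c) u :=
    (Real.hasDerivAt_sqrt hu.ne').mul_const c
  have hsin (c : ℝ) := (hsqrt c).mul (hsqrt c).sin
  refine (((hsin (Real.cos θ)).add (hsin (Real.sin θ))).div (hasDerivAt_id u) hu.ne').congr_deriv ?_
  have := Real.sqrt_pos.2 hu
  have hsq := Real.sq_sqrt hu.le
  rw [radialSymbolDeriv2]
  simp only [Pi.add_apply, Pi.mul_apply, id]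
  field_simp
  grind

theorem continuousOn_radialSymbolDeriv2 (θ : ℝ) :
    ContinuousOn (radialSymbolDeriv2 θ) (Ioi 0) := by
  unfold radialSymbolDeriv2
  refine ContinuousOn.div (by fun_prop) (by fun_prop) fun u hu ↦ ?_
  have := mem_Ioi.1 hu
  positivity

theorem sq_sub_le_two_sub_two_mul_cos {x : ℝ} (hx : |x| ≤ 1) :
    x ^ 2 - x ^ 4 / 4 ≤ 2 - 2 * Real.cos x := by
  have := (abs_le.1 (Real.cos_bound hx)).2
  rw [Even.pow_abs (by decide)] at this
  nlinarith [pow_nonneg (sq_nonneg x) 2]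

theorem sq_sub_le_mul_sin (x : ℝ) : x ^ 2 - x ^ 4 / 4 ≤ x * Real.sin x := by
  wlog hx : 0 < x generalizing x
  · rcases (not_lt.1 hx).eq_or_lt with rfl | hx
    · simp
    · simpa [Even.neg_pow (by decide : Even 4)] using this (-x) (neg_pos.2 hx)
  nlinarith [Real.sin_gt_sub_cube hx, pow_pos hx 4]

theorem mul_sin_le_sq (x : ℝ) : x * Real.sin x ≤ x ^ 2 :=
  calc x * Real.sin x ≤ |x| * |Real.sin x| := (le_abs_self _).trans_eq (abs_mul _ _)
    _ ≤ |x| * |x| := mul_le_mul_of_nonneg_left Real.abs_sin_le_abs (abs_nonneg x)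
    _ = x ^ 2 := by rw [abs_mul_abs_self, sq]

theorem abs_mul_mul_cos_sub_sin_le (x : ℝ) :
    |x * (x * Real.cos x - Real.sin x)| ≤ x ^ 4 / 2 := by
  rw [abs_le]
  constructor
  · nlinarith [mul_sin_le_sq x,
      mul_le_mul_of_nonneg_left (Real.one_sub_sq_div_two_le_cos (x := x)) (sq_nonneg x)]
  · nlinarith [sq_sub_le_mul_sin x, mul_le_mul_of_nonneg_left (Real.cos_le_one x) (sq_nonneg x),
      pow_nonneg (sq_nonneg x) 2]

theorem two_sub_two_mul_cos_le_sq (x : ℝ) : 2 - 2 * Real.cos x ≤ x ^ 2 := by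
  linarith [Real.one_sub_sq_div_two_le_cos (x := x)]

theorem sq_sqrt_mul_cos_add_sq_sqrt_mul_sin (θ : ℝ) (hu : 0 ≤ u) :
    (√u * Real.cos θ) ^ 2 + (√u * Real.sin θ) ^ 2 = u := by
  rw [mul_pow, mul_pow, ← mul_add, Real.cos_sq_add_sin_sq, mul_one, Real.sq_sqrt hu]

theorem pow_four_sqrt_mul_cos_add_pow_four_sqrt_mul_sin_le (θ : ℝ) (hu : 0 ≤ u) :
    (√u * Real.cos θ) ^ 4 + (√u * Real.sin θ) ^ 4 ≤ u ^ 2 := by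
  calc _ ≤ ((√u * Real.cos θ) ^ 2 + (√u * Real.sin θ) ^ 2) ^ 2 := by
        nlinarith [mul_nonneg (sq_nonneg (√u * Real.cos θ)) (sq_nonneg (√u * Real.sin θ))]
    _ = u ^ 2 := by rw [sq_sqrt_mul_cos_add_sq_sqrt_mul_sin θ hu]

theorem radialSymbol_le (θ : ℝ) (hu : 0 ≤ u) : radialSymbol θ u ≤ u := by
  unfold radialSymbol
  linarith [sq_sqrt_mul_cos_add_sq_sqrt_mul_sin θ hu,
    two_sub_two_mul_cos_le_sq (√u * Real.cos θ), two_sub_two_mul_cos_le_sq (√u * Real.sin θ)]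

theorem le_radialSymbol (θ : ℝ) (hu : 0 ≤ u) (hu1 : u ≤ 1) :
    u - u ^ 2 / 4 ≤ radialSymbol θ u := by
  have hsqrt : √u ≤ 1 := Real.sqrt_le_one.2 hu1
  have habs {c : ℝ} (hc : |c| ≤ 1) : |√u * c| ≤ 1 := by
    rw [abs_mul, abs_of_nonneg (Real.sqrt_nonneg u)]
    exact mul_le_one₀ hsqrt (abs_nonneg c) hc
  unfold radialSymbol
  linarith [sq_sqrt_mul_cos_add_sq_sqrt_mul_sin θ hu,
    pow_four_sqrt_mul_cos_add_pow_four_sqrt_mul_sin_le θ hu,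
    sq_sub_le_two_sub_two_mul_cos (habs (Real.abs_cos_le_one θ)),
    sq_sub_le_two_sub_two_mul_cos (habs (Real.abs_sin_le_one θ))]

theorem radialSymbolDeriv_le_one (θ : ℝ) (hu : 0 < u) : radialSymbolDeriv θ u ≤ 1 := by
  rw [radialSymbolDeriv, div_le_one hu]
  linarith [sq_sqrt_mul_cos_add_sq_sqrt_mul_sin θ hu.le,
    mul_sin_le_sq (√u * Real.cos θ), mul_sin_le_sq (√u * Real.sin θ)]

theorem le_radialSymbolDeriv (θ : ℝ) (hu : 0 < u) : 1 - u / 4 ≤ radialSymbolDeriv θ u := by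
  rw [radialSymbolDeriv, le_div_iff₀ hu]
  linarith [sq_sqrt_mul_cos_add_sq_sqrt_mul_sin θ hu.le,
    pow_four_sqrt_mul_cos_add_pow_four_sqrt_mul_sin_le θ hu.le,
    sq_sub_le_mul_sin (√u * Real.cos θ), sq_sub_le_mul_sin (√u * Real.sin θ)]

theorem abs_radialSymbolDeriv2_le (θ : ℝ) (hu : 0 < u) : |radialSymbolDeriv2 θ u| ≤ 1 / 4 := by
  rw [radialSymbolDeriv2, abs_div, abs_of_pos (by positivity : 0 < 2 * u ^ 2),
    div_le_iff₀ (by positivity)]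
  refine (abs_add_le _ _).trans ?_
  linarith [pow_four_sqrt_mul_cos_add_pow_four_sqrt_mul_sin_le θ hu.le,
    abs_mul_mul_cos_sub_sin_le (√u * Real.cos θ), abs_mul_mul_cos_sub_sin_le (√u * Real.sin θ)]

theorem radialSymbol_nonneg (θ u : ℝ) : 0 ≤ radialSymbol θ u := by
  unfold radialSymbol
  linarith [Real.cos_le_one (√u * Real.cos θ), Real.cos_le_one (√u * Real.sin θ)]

theorem abs_radialSymbol_mul_radialSymbolDeriv2_le (θ : ℝ) (hu : 0 < u) :
    |radialSymbol θ u * radialSymbolDeriv2 θ u| ≤ u / 4 := by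
  rw [abs_mul, abs_of_nonneg (radialSymbol_nonneg θ u), div_eq_mul_one_div]
  exact mul_le_mul (radialSymbol_le θ hu.le) (abs_radialSymbolDeriv2_le θ hu) (abs_nonneg _) hu.le

end RadialSymbol

section FourthOrderSchrodinger

open Set
open scoped Real Topology

theorem latticePhase_four_sqrt_mul (θ u : ℝ) :
    latticePhase 4 (√u * Real.cos θ, √u * Real.sin θ) = radialSymbol θ u ^ 2 := by
  rw [latticePhase, radialSymbol]
  ring

theorem hasSqrtDecayOn_latticePhase_four :
    HasSqrtDecayOn (latticePhase 4) {p | p.1 ^ 2 + p.2 ^ 2 ≤ 1 / 2} := by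
  have hbounds : ∀ θ, ∀ u ∈ Ioc (0 : ℝ) (1 / 2), 7 / 8 * u ≤ radialSymbol θ u ∧
      7 / 8 ≤ radialSymbolDeriv θ u ∧ radialSymbolDeriv θ u ≤ 1 := fun θ u hu ↦
    ⟨by nlinarith [le_radialSymbol θ hu.1.le (by linarith [hu.2]), hu.1, hu.2],
      by linarith [le_radialSymbolDeriv θ hu.1, hu.2], radialSymbolDeriv_le_one θ hu.1⟩
  refine .of_polar (continuous_latticePhase 4) (by norm_num) one_pos (M := 3)
    (h' := fun θ u ↦ 2 * (radialSymbol θ u * radialSymbolDeriv θ u))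
    (h'' := fun θ u ↦ 2 * (radialSymbolDeriv θ u * radialSymbolDeriv θ u +
      radialSymbol θ u * radialSymbolDeriv2 θ u))
    (fun θ u hu ↦ ?_) (fun θ u hu ↦ ?_) (fun θ ↦ ?_) (fun θ u hu ↦ ?_) (fun θ u hu ↦ ?_)
    (fun θ u hu ↦ ?_)
  · simp only [latticePhase_four_sqrt_mul]
    refine ((hasDerivAt_radialSymbol hu.1).pow 2).congr_deriv ?_
    ring
  · exact ((hasDerivAt_radialSymbol hu.1).mul (hasDerivAt_radialSymbolDeriv hu.1)).const_mul 2
  · have h₀ : ContinuousOn (radialSymbol θ) (Ioc 0 (1 / 2)) :=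
      HasDerivAt.continuousOn fun u hu ↦ hasDerivAt_radialSymbol hu.1
    have h₁ : ContinuousOn (radialSymbolDeriv θ) (Ioc 0 (1 / 2)) :=
      HasDerivAt.continuousOn fun u hu ↦ hasDerivAt_radialSymbolDeriv hu.1
    have h₂ : ContinuousOn (radialSymbolDeriv2 θ) (Ioc 0 (1 / 2)) :=
      (continuousOn_radialSymbolDeriv2 θ).mono fun u hu ↦ hu.1
    fun_prop
  · nlinarith [hbounds θ u hu, hu.2,
      (abs_le.1 (abs_radialSymbol_mul_radialSymbolDeriv2_le θ hu.1)).1]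
  · nlinarith [hbounds θ u hu, hu.2,
      (abs_le.1 (abs_radialSymbol_mul_radialSymbolDeriv2_le θ hu.1)).2]
  · nlinarith [hbounds θ u hu, hu.1]

theorem exists_mem_nhds_hasSqrtDecayOn_latticePhase {κ : ℝ} (hκ : κ ≠ 0) (p : ℝ × ℝ) :
    ∃ U ∈ 𝓝 p, HasSqrtDecayOn (latticePhase κ) U := by
  by_cases hp : ∀ v : ℝ × ℝ, 8 * (v.1 * Real.sin p.1 + v.2 * Real.sin p.2) ^ 2 +
      4 * (κ - 2 * Real.cos p.1 - 2 * Real.cos p.2) *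
        (v.1 ^ 2 * Real.cos p.1 + v.2 ^ 2 * Real.cos p.2) = 0
  · have hdisc : {q : ℝ × ℝ | q.1 ^ 2 + q.2 ^ 2 ≤ 1 / 2} ∈ 𝓝 (p - p) :=
      (by fun_prop : Continuous fun q : ℝ × ℝ ↦ q.1 ^ 2 + q.2 ^ 2).continuousAt.preimage_mem_nhds
        (Iic_mem_nhds (by norm_num))
    refine ⟨_, (by fun_prop : Continuous (· - p)).continuousAt.preimage_mem_nhds hdisc,
      .preimage_sub_right ?_⟩
    simpa only [latticePhase_add_eq_of_hessian_eq_zero hκ hp] using hasSqrtDecayOn_latticePhase_four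
  · obtain ⟨v, hv⟩ := not_forall.1 hp
    exact exists_mem_nhds_hasSqrtDecayOn_of_lineDeriv2_ne_zero (continuous_latticePhase κ)
      (hasLineDerivAt_latticePhase κ v) (hasLineDerivAt_lineDeriv_latticePhase κ v)
      (by fun_prop) hv

theorem om_pow_four_add_mul_om_sq (γ : ℝ) (ξ : ℝ × ℝ) :
    om ξ ^ 4 + γ * om ξ ^ 2 = latticePhase (4 + γ / 2) ξ - γ ^ 2 / 4 := by
  have hsq : om ξ ^ 2 = (2 - 2 * Real.cos ξ.1) + (2 - 2 * Real.cos ξ.2) :=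
    Real.sq_sqrt (by linarith [Real.cos_le_one ξ.1, Real.cos_le_one ξ.2])
  rw [show om ξ ^ 4 = (om ξ ^ 2) ^ 2 by ring, hsq, latticePhase]
  ring

theorem stmt3_general (γ : ℝ) (hγ : γ ≠ -8) :
    ∃ C > (0 : ℝ), ∀ (x : ℝ × ℝ) (t : ℝ),
      ‖((((2 * π) ^ 2)⁻¹ : ℝ) : ℂ) * ∫ ξ in Icc (-π) π ×ˢ Icc (-π) π,
        Complex.exp (Complex.I *
          ((x.1 * ξ.1 + x.2 * ξ.2 + (om ξ ^ 4 + γ * om ξ ^ 2) * t : ℝ) : ℂ))‖ ≤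
        C * (1 + |t|) ^ (-(1 / 2 : ℝ)) := by
  have hκ : 4 + γ / 2 ≠ 0 := fun h ↦ hγ (by linarith)
  have hcell : IsCompact (Icc (-π) π ×ˢ Icc (-π) π) := isCompact_Icc.prod isCompact_Icc
  obtain ⟨C, hC, h⟩ := (HasSqrtDecayOn.of_isCompact hcell (continuous_latticePhase (4 + γ / 2))
    fun p _ ↦ exists_mem_nhds_hasSqrtDecayOn_latticePhase hκ p).exists_norm_integral_le hcell
      ((convex_Icc _ _).prod (convex_Icc _ _))
  refine ⟨((2 * π) ^ 2)⁻¹ * C, by positivity, fun x t ↦ ?_⟩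
  have hphase (ξ : ℝ × ℝ) : x.1 * ξ.1 + x.2 * ξ.2 + (om ξ ^ 4 + γ * om ξ ^ 2) * t =
      (x.1 • .fst ℝ ℝ ℝ + x.2 • .snd ℝ ℝ ℝ : ℝ × ℝ →L[ℝ] ℝ) ξ + -(γ ^ 2 / 4 * t) +
        t * latticePhase (4 + γ / 2) ξ := by
    rw [om_pow_four_add_mul_om_sq]
    simp only [add_apply, smul_apply, ContinuousLinearMap.coe_fst', smul_eq_mul,
      ContinuousLinearMap.coe_snd']
    ring
  simp only [hphase]
  rw [norm_mul, Complex.norm_of_nonneg (by positivity), mul_assoc]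
  gcongr
  exact h _ _ t

end FourthOrderSchrodinger

/-- For `γ ∈ {−16, 0}` the fundamental solution on `ℤ²` decays like `(1+|t|)^{-1/2}`. -/
theorem stmt3 (γ : ℝ) (hγ : γ = -16 ∨ γ = 0) :
    ∃ C > (0 : ℝ), ∀ (x : ℤ × ℤ) (t : ℝ),
      ‖G2 γ x t‖ ≤ C * (1 + |t|) ^ (-(1 / 2 : ℝ)) := by
  obtain ⟨C, hC, h⟩ := stmt3_general γ (by rcases hγ with rfl | rfl <;> norm_num)
  exact ⟨C, hC, fun x ↦ h (x.1, x.2)⟩
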